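/- Let 𝔤 be the real Lie algebra with basis D, X^0,…,X^n, P_0,…,P_n, Z, V_1,…,V_n, X_e = P_0, X_f, X_h, subject to the bracket relations: [P_i, X^j] = -2δ_i^j Z, [X^i, D] = X^i/2, [P_i, D] = P_i/2, [Z, D] = Z, [X_e, X_f] = -X_h, [X_h, X_e] = -2X_e, [X_h, X_f] = 2X_f, [P_0, V_a] = P_a, [V_a, P_b] = k_{abc} X^c, [V_a, X^b] = δ_a^b X^0, [X_h, V_a] = V_a, [X_f, P_a] = V_a, [D, X_f] = X_f/2, [Z, X_f] = X^0/2, [P_a, X_h] = P_a, [X_h, X^0] = X^0, [Z, X_h] = Z, and all other brackets among basis elements zero (where k_{abc} are the symmetric coefficients of a cubic form). Then these brackets satisfy the Jacobi identity, so 𝔤 is a Lie algebra of dimension 3n+6. -/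

import Mathlib

open Finset

/-- basis of the universal algebra of Killing fields of a tree-level q-map space:
`D`, `X^i`, `P_i` (`i = 0,…,n`, with `X_e = P 0`), `Z`, `V_a` (`a = 1,…,n`),
`F = X_f`, `H = X_h`. -/
inductive QBasis (n : ℕ) : Type
  | D : QBasis n
  | X : Fin (n+1) → QBasis n
  | P : Fin (n+1) → QBasis n
  | Z : QBasis n
  | V : Fin n → QBasis n
  | F : QBasis n
  | H : QBasis n
  deriving DecidableEq, Fintype

noncomputable section

/-- basis vector (delta function). -/
def δb {n : ℕ} (b : QBasis n) : QBasis n → ℝ := fun e => if e = b then 1 else 0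

/-- the structure constants: the bracket of two basis vectors, as listed in the
paper (all unlisted brackets are zero, and the listed ones are extended
antisymmetrically). -/
def qBra {n : ℕ} (k : Fin n → Fin n → Fin n → ℝ) :
    QBasis n → QBasis n → (QBasis n → ℝ)
  | .P i, .X j => if i = j then (-2 : ℝ) • δb (.Z) else 0
  | .X j, .P i => if i = j then (2 : ℝ) • δb (.Z) else 0
  | .X i, .D => (1/2 : ℝ) • δb (.X i)
  | .D, .X i => (-(1/2) : ℝ) • δb (.X i)
  | .P i, .D => (1/2 : ℝ) • δb (.P i)
  | .D, .P i => (-(1/2) : ℝ) • δb (.P i)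
  | .Z, .D => δb (.Z)
  | .D, .Z => -δb (.Z)
  | .P i, .F => Fin.cases (motive := fun _ => QBasis n → ℝ)
      (-δb (.H)) (fun a => -δb (.V a)) i
  | .F, .P i => Fin.cases (motive := fun _ => QBasis n → ℝ)
      (δb (.H)) (fun a => δb (.V a)) i
  | .H, .P i => (if i = 0 then (-2 : ℝ) else (-1 : ℝ)) • δb (.P i)
  | .P i, .H => (if i = 0 then (2 : ℝ) else (1 : ℝ)) • δb (.P i)
  | .H, .F => (2 : ℝ) • δb (.F)
  | .F, .H => (-2 : ℝ) • δb (.F)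
  | .P i, .V a => Fin.cases (motive := fun _ => QBasis n → ℝ)
      (δb (.P a.succ)) (fun b => -∑ c, k a b c • δb (.X c.succ)) i
  | .V a, .P i => Fin.cases (motive := fun _ => QBasis n → ℝ)
      (-δb (.P a.succ)) (fun b => ∑ c, k a b c • δb (.X c.succ)) i
  | .V a, .X i => Fin.cases (motive := fun _ => QBasis n → ℝ)
      0 (fun b => if a = b then δb (.X 0) else 0) i
  | .X i, .V a => Fin.cases (motive := fun _ => QBasis n → ℝ)
      0 (fun b => if a = b then -δb (.X 0) else 0) i
  | .H, .V a => δb (.V a)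
  | .V a, .H => -δb (.V a)
  | .D, .F => (1/2 : ℝ) • δb (.F)
  | .F, .D => (-(1/2) : ℝ) • δb (.F)
  | .Z, .F => (1/2 : ℝ) • δb (.X 0)
  | .F, .Z => (-(1/2) : ℝ) • δb (.X 0)
  | .H, .X i => if i = 0 then δb (.X 0) else 0
  | .X i, .H => if i = 0 then -δb (.X 0) else 0
  | .Z, .H => δb (.Z)
  | .H, .Z => -δb (.Z)
  | _, _ => 0

/-- the bilinear extension of the structure constants to the whole
`(3n+6)`-dimensional space. -/
def qBracket {n : ℕ} (k : Fin n → Fin n → Fin n → ℝ)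
    (x y : QBasis n → ℝ) : QBasis n → ℝ :=
  fun e => ∑ b : QBasis n, ∑ b' : QBasis n, x b * y b' * qBra k b b' e

noncomputable section

def qB {n : ℕ} (k : Fin n → Fin n → Fin n → ℝ) :
    (QBasis n → ℝ) →ₗ[ℝ] (QBasis n → ℝ) →ₗ[ℝ] (QBasis n → ℝ) :=
  LinearMap.mk₂ ℝ (qBracket k)
    (by intro x x' y; ext e; simp [qBracket, add_mul, Finset.sum_add_distrib])
    (by intro c x y; ext e; simp [qBracket, mul_assoc, Finset.mul_sum])
    (by intro x y y'; ext e; simp [qBracket, mul_add, add_mul, Finset.sum_add_distrib])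
    (by intro c x y; ext e; simp [qBracket, mul_assoc, mul_left_comm, Finset.mul_sum])

theorem qB_apply {n : ℕ} (k : Fin n → Fin n → Fin n → ℝ) (x y) :
    qB k x y = qBracket k x y := rfl

theorem qB_δ {n : ℕ} (k : Fin n → Fin n → Fin n → ℝ) (b b') :
    qB k (δb b) (δb b') = qBra k b b' := by
  ext e
  simp [qB_apply, qBracket, δb]

theorem q_ext {n : ℕ} (f : (QBasis n → ℝ) →ₗ[ℝ] (QBasis n → ℝ))
    (h : ∀ b, f (δb b) = 0) (x) : f x = 0 := by
  have hx : x = ∑ b, x b • δb b := by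
    ext e; simp [δb, Finset.sum_apply]
  rw [hx, map_sum]
  simp [h]

theorem qBra_anti {n : ℕ} (k : Fin n → Fin n → Fin n → ℝ) (b b') :
    qBra k b b' = - qBra k b' b := by
  rcases b with _ | i1 | i1 | _ | i1 | _ | _ <;>
  rcases b' with _ | i2 | i2 | _ | i2 | _ | _ <;>
  (try induction i1 using Fin.cases) <;>
  (try induction i2 using Fin.cases) <;>
  simp [qBra] <;> (try split_ifs) <;> simp_all

theorem qB_anti {n : ℕ} (k : Fin n → Fin n → Fin n → ℝ) (x y) :
    qB k x y = - qB k y x := by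
  rw [eq_neg_iff_add_eq_zero]
  refine q_ext ((qB k).flip y + qB k y) (fun b => ?_) x
  refine q_ext (qB k (δb b) + (qB k).flip (δb b)) (fun b' => ?_) y
  simp [qB_δ, qBra_anti k b b']

set_option maxHeartbeats 4000000 in
theorem qB_jac_basis {n : ℕ} (k : Fin n → Fin n → Fin n → ℝ)
    (hsymm : ∀ a b c, k a b c = k b a c ∧ k a b c = k a c b) (b1 b2 b3 : QBasis n) :
    qB k (δb b1) (qBra k b2 b3) + qB k (δb b2) (qBra k b3 b1)
      + qB k (δb b3) (qBra k b1 b2) = 0 := by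
  have h1 : ∀ a b c, k a b c = k b a c := fun a b c => (hsymm a b c).1
  have h2 : ∀ a b c, k a b c = k a c b := fun a b c => (hsymm a b c).2
  have hz : ∀ a : Fin n, (0 = a.succ) = False := fun a => eq_false (Fin.succ_ne_zero a).symm
  rcases b1 with _ | i1 | i1 | _ | i1 | _ | _ <;>
  rcases b2 with _ | i2 | i2 | _ | i2 | _ | _ <;>
  rcases b3 with _ | i3 | i3 | _ | i3 | _ | _ <;>
  (try (simp only [qBra, map_zero, map_neg, map_smul, qB_δ, add_zero, neg_zero, smul_zero]; done)) <;>
  (try induction i1 using Fin.cases) <;>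
  (try induction i2 using Fin.cases) <;>
  (try induction i3 using Fin.cases) <;>
  simp [qBra, qB_δ, hz] <;>
  (try split_ifs) <;> (try simp_all [qB_δ, qBra]) <;> (try module) <;>
  simp [Finset.smul_sum, smul_smul, mul_comm]

theorem qB_jac {n : ℕ} (k : Fin n → Fin n → Fin n → ℝ)
    (hsymm : ∀ a b c, k a b c = k b a c ∧ k a b c = k a c b) (x y z) :
    qB k x (qB k y z) + qB k y (qB k z x) + qB k z (qB k x y) = 0 := by
  refine q_ext ((qB k).flip (qB k y z) + qB k y ∘ₗ qB k z + qB k z ∘ₗ (qB k).flip y)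
    (fun b1 => ?_) x
  refine q_ext (qB k (δb b1) ∘ₗ (qB k).flip z + (qB k).flip (qB k z (δb b1))
    + qB k z ∘ₗ qB k (δb b1)) (fun b2 => ?_) y
  refine q_ext (qB k (δb b1) ∘ₗ qB k (δb b2) + qB k (δb b2) ∘ₗ (qB k).flip (δb b1)
    + (qB k).flip (qB k (δb b1) (δb b2))) (fun b3 => ?_) z
  simpa [qB_δ] using qB_jac_basis k hsymm b1 b2 b3

def qEquiv (n : ℕ) : QBasis n ≃
    (Unit ⊕ Unit ⊕ Unit ⊕ Unit) ⊕ (Fin (n+1) ⊕ Fin (n+1) ⊕ Fin n) where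
  toFun
    | .D => .inl (.inl ())
    | .Z => .inl (.inr (.inl ()))
    | .F => .inl (.inr (.inr (.inl ())))
    | .H => .inl (.inr (.inr (.inr ())))
    | .X i => .inr (.inl i)
    | .P i => .inr (.inr (.inl i))
    | .V i => .inr (.inr (.inr i))
  invFun
    | .inl (.inl ()) => .D
    | .inl (.inr (.inl ())) => .Z
    | .inl (.inr (.inr (.inl ()))) => .F
    | .inl (.inr (.inr (.inr ()))) => .H
    | .inr (.inl i) => .X i
    | .inr (.inr (.inl i)) => .P i
    | .inr (.inr (.inr i)) => .V i
  left_inv b := by cases b <;> rfl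
  right_inv b := by rcases b with (_ | _ | _ | _) | (_ | _ | _) <;> rfl

end

/-- the displayed bracket relations define a skew-symmetric
bracket satisfying the Jacobi identity, i.e. a Lie algebra structure, on the
`(3n+6)`-dimensional space. -/
theorem stmt_4 {n : ℕ} (k : Fin n → Fin n → Fin n → ℝ)
    (hsymm : ∀ a b c, k a b c = k b a c ∧ k a b c = k a c b) :
    (∀ x y : QBasis n → ℝ, qBracket k x y = -qBracket k y x) ∧
    (∀ x y z : QBasis n → ℝ,
      qBracket k x (qBracket k y z) + qBracket k y (qBracket k z x) +
        qBracket k z (qBracket k x y) = 0) ∧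
    Module.finrank ℝ (QBasis n → ℝ) = 3 * n + 6 := by
  refine ⟨fun x y => qB_anti k x y, fun x y z => qB_jac k hsymm x y z, ?_⟩
  rw [Module.finrank_fintype_fun_eq_card, Fintype.card_congr (qEquiv n)]
  simp
  omega

end
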